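/- Let ω ∈ D = D̂ ∩ Ď be a radial weight. Then ω̃ is a weight and ω̂(r) ≍ ∫_r^1 ω̃(s) ds for all 0 ≤ r < 1; that is, there exists a constant c ≥ 1 depending only on ω such that c^{-1} ω̂(r) ≤ ∫_r^1 ω̂(s)/(1−s) ds ≤ c ω̂(r) for all 0 ≤ r < 1. -/

import Mathlib

/-!
Write `φ(s) = 1 - (1 - s)/K`, with `K, C` from the class `Ď`, and `I(a, b) = ∫_a^b ω̃`. Since
`ds/(1 - s)` is invariant under `φ`, the hypothesis `C ω̂(φ(s)) ≤ ω̂(s)` integrates to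
`C I(φ(r), φ(R)) ≤ I(r, R)` (`assocW_integral_contract`). As `φ(R) ≥ R` and `ω̂` is decreasing,
`I(r, R) ≤ I(r, φ(r)) + I(φ(r), φ(R)) ≤ (K - 1) ω̂(r) + I(r, R)/C`,
and because `I(r, R)` is finite for `R < 1` it can be absorbed on the left, which bounds it by
`(K - 1) C/(C - 1) · ω̂(r)` uniformly in `R` (`assocW_integral_bound`). Letting `R → 1` gives the
integrability of `ω̃` and the upper estimate.

For the lower estimate only the interval `[r, (1 + r)/2]` is kept: there
`ω̃ ≥ ω̂((1 + r)/2)/(1 - r)`, and `D̂` compares this with `ω̂(r)`.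
-/

open MeasureTheory Set

/-- Tail integral `ω̂(r) = ∫_r^1 ω(s) ds`. -/
noncomputable def tailInt (ω : ℝ → ℝ) (r : ℝ) : ℝ := ∫ s in r..1, ω s

/-- A radial weight: nonnegative, integrable on `[0,1)`, with positive tails. -/
def RadialWeight (ω : ℝ → ℝ) : Prop :=
  (∀ r ∈ Set.Ico (0:ℝ) 1, 0 ≤ ω r) ∧ MeasureTheory.IntegrableOn ω (Set.Ico 0 1) ∧
    ∀ r ∈ Set.Ico (0:ℝ) 1, 0 < tailInt ω r

/-- The class `D̂` of upper doubling weights. -/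
def Dhat (ω : ℝ → ℝ) : Prop :=
  ∃ C : ℝ, 1 ≤ C ∧ ∀ r ∈ Set.Ico (0:ℝ) 1, tailInt ω r ≤ C * tailInt ω ((1 + r) / 2)

/-- The class `Ď`. -/
def Dcheck (ω : ℝ → ℝ) : Prop :=
  ∃ K C : ℝ, 1 < K ∧ 1 < C ∧ ∀ r ∈ Set.Ico (0:ℝ) 1,
    C * tailInt ω (1 - (1 - r) / K) ≤ tailInt ω r

/-- The associated weight `ω̃(r) = ω̂(r)/(1-r)`. -/
noncomputable def assocW (ω : ℝ → ℝ) (r : ℝ) : ℝ := tailInt ω r / (1 - r)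

/-- `‖f‖_{A^p_ω}^p = ∫_𝔻 |f|^p ω dA`, with `dA` the normalized area measure. -/
noncomputable def ApNorm (p : ℝ) (ω : ℝ → ℝ) (f : ℂ → ℂ) : ℝ :=
  Real.pi⁻¹ * ∫ z in Metric.ball (0:ℂ) 1, ‖f z‖ ^ p * ω ‖z‖

/-- `‖Re f‖_{L^p_ω}^p = ∫_𝔻 |Re f|^p ω dA`. -/
noncomputable def LpReNorm (p : ℝ) (ω : ℝ → ℝ) (f : ℂ → ℂ) : ℝ :=
  Real.pi⁻¹ * ∫ z in Metric.ball (0:ℂ) 1, |(f z).re| ^ p * ω ‖z‖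

/-- `M_p^p(s, Re f)`, the `p`-th power of the `p`-mean of `Re f` on the circle of radius `s`. -/
noncomputable def Mpp (p : ℝ) (f : ℂ → ℂ) (s : ℝ) : ℝ :=
  (2 * Real.pi)⁻¹ * ∫ θ in (0:ℝ)..(2 * Real.pi),
    |(f ((s : ℂ) * Complex.exp ((θ : ℂ) * Complex.I))).re| ^ p

/-- `sup_{0<s<r} M_p^p(s, Re f)`. -/
noncomputable def supMpp (p : ℝ) (f : ℂ → ℂ) (r : ℝ) : ℝ :=
  sSup ((fun s => Mpp p f s) '' Set.Ioo (0:ℝ) r)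

section Helpers

variable {ω : ℝ → ℝ}

lemma RadialWeight.intervalIntegrable (hω : RadialWeight ω) : IntervalIntegrable ω volume 0 1 :=
  (intervalIntegrable_iff_integrableOn_Ico_of_le zero_le_one).2 hω.2.1

lemma RadialWeight.tailInt_antitone (hω : RadialWeight ω) {a b : ℝ} (ha : 0 ≤ a) (hab : a ≤ b)
    (hb : b < 1) : tailInt ω b ≤ tailInt ω a := by
  have hi := hω.intervalIntegrable
  have h1 : IntervalIntegrable ω volume a b := hi.mono_set (by
    rw [uIcc_of_le hab, uIcc_of_le zero_le_one]; exact Icc_subset_Icc ha hb.le)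
  have h2 : IntervalIntegrable ω volume b 1 := hi.mono_set (by
    rw [uIcc_of_le hb.le, uIcc_of_le zero_le_one]; exact Icc_subset_Icc (ha.trans hab) le_rfl)
  have h3 := intervalIntegral.integral_add_adjacent_intervals h1 h2
  have h4 : 0 ≤ ∫ s in a..b, ω s := intervalIntegral.integral_nonneg hab
    fun u hu => hω.1 u ⟨ha.trans hu.1, hu.2.trans_lt hb⟩
  unfold tailInt
  linarith

lemma RadialWeight.assocW_nonneg (hω : RadialWeight ω) {s : ℝ} (hs : s ∈ Ico (0:ℝ) 1) :
    0 ≤ assocW ω s :=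
  div_nonneg (hω.2.2 s hs).le (by linarith [hs.2])

lemma RadialWeight.continuousOn_assocW (hω : RadialWeight ω) :
    ContinuousOn (assocW ω) (Ico 0 1) := by
  have hi : IntegrableOn ω (uIcc 0 1) := by
    rw [uIcc_of_le zero_le_one, integrableOn_Icc_iff_integrableOn_Ico]
    exact hω.2.1
  have hc := intervalIntegral.continuousOn_primitive_interval_left hi
  rw [uIcc_of_le zero_le_one] at hc
  exact (hc.mono Ico_subset_Icc_self).div (by fun_prop) fun s hs => by linarith [hs.2]

lemma RadialWeight.assocW_intervalIntegrable (hω : RadialWeight ω) {a b : ℝ} (ha : 0 ≤ a)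
    (hab : a ≤ b) (hb : b < 1) : IntervalIntegrable (assocW ω) volume a b := by
  refine (hω.continuousOn_assocW.mono ?_).intervalIntegrable
  rw [uIcc_of_le hab]
  exact fun s hs => ⟨ha.trans hs.1, hs.2.trans_lt hb⟩

/-- Since `ds/(1 - s)` is invariant under `s ↦ 1 - (1 - s)/K`, the `Ď` inequality says that this
map contracts the integral of `ω̃` by the factor `C`. -/
lemma assocW_integral_contract (hω : RadialWeight ω) {K C : ℝ} (hK : 1 < K)
    (h : ∀ r ∈ Ico (0:ℝ) 1, C * tailInt ω (1 - (1 - r) / K) ≤ tailInt ω r)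
    {r R : ℝ} (hr : 0 ≤ r) (hrR : r ≤ R) (hR : R < 1) :
    C * ∫ s in (1 - (1 - r) / K)..(1 - (1 - R) / K), assocW ω s ≤ ∫ s in r..R, assocW ω s := by
  have hK0 : 0 < K := by linarith
  have hφ : ∀ s : ℝ, 1 - (1 - s) / K = (1 - K⁻¹) + K⁻¹ * s := fun s => by ring
  have hsub : ∫ s in (1 - (1 - r) / K)..(1 - (1 - R) / K), assocW ω s
      = ∫ s in r..R, K⁻¹ * assocW ω (1 - (1 - s) / K) := by
    simp only [hφ]
    rw [intervalIntegral.integral_const_mul, ← intervalIntegral.smul_integral_comp_add_mul,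
      smul_eq_mul]
  rw [hsub, ← intervalIntegral.integral_const_mul]
  have hmem : ∀ s ∈ Icc r R, 1 - (1 - s) / K ∈ Ico (0:ℝ) 1 := fun s hs => by
    have h1 : 0 < 1 - s := by linarith [hs.2]
    have h2 : (1 - s) / K ≤ 1 - s := div_le_self h1.le hK.le
    have h3 : 0 < (1 - s) / K := div_pos h1 hK0
    constructor <;> linarith [hs.1]
  refine intervalIntegral.integral_mono_on hrR ?_
    (hω.assocW_intervalIntegrable hr hrR hR) fun s hs => ?_
  · refine ContinuousOn.intervalIntegrable ?_
    rw [uIcc_of_le hrR]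
    refine continuousOn_const.mul (continuousOn_const.mul ?_)
    exact hω.continuousOn_assocW.comp (by fun_prop) hmem
  · have h1 : 0 < 1 - s := by linarith [hs.2]
    have h2 := h s ⟨hr.trans hs.1, hs.2.trans_lt hR⟩
    unfold assocW
    have : C * (K⁻¹ * (tailInt ω (1 - (1 - s) / K) / (1 - (1 - (1 - s) / K))))
        = C * tailInt ω (1 - (1 - s) / K) / (1 - s) := by
      rw [sub_sub_cancel]
      field_simp
    rw [this]
    gcongr

/-- The bound is uniform in `R`, so it survives `R → 1`. -/
lemma assocW_integral_bound (hω : RadialWeight ω) {K C : ℝ} (hK : 1 < K) (hC : 1 < C)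
    (h : ∀ r ∈ Ico (0:ℝ) 1, C * tailInt ω (1 - (1 - r) / K) ≤ tailInt ω r)
    {r R : ℝ} (hr : 0 ≤ r) (hrR : r ≤ R) (hR : R < 1) :
    ∫ s in r..R, assocW ω s ≤ (K - 1) * C / (C - 1) * tailInt ω r := by
  have hK0 : 0 < K := by linarith
  have hcon := assocW_integral_contract hω hK h hr hrR hR
  have hφR1 : 0 < (1 - R) / K := div_pos (by linarith) hK0
  have hφR2 : (1 - R) / K ≤ 1 - R := div_le_self (by linarith) hK.le
  have hφr1 : 0 < (1 - r) / K := div_pos (by linarith) hK0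
  have hφr2 : (1 - r) / K ≤ 1 - r := div_le_self (by linarith) hK.le
  have hφrR : (1 - R) / K ≤ (1 - r) / K := by gcongr
  set a := 1 - (1 - r) / K with ha
  set b := 1 - (1 - R) / K with hb
  have hra : r ≤ a := by linarith
  have hab : a ≤ b := by linarith
  have hRb : R ≤ b := by linarith
  have hb1 : b < 1 := by linarith
  have i1 := hω.assocW_intervalIntegrable hr hra (by linarith)
  have i2 := hω.assocW_intervalIntegrable (hr.trans hra) hab hb1
  have i3 := hω.assocW_intervalIntegrable hr hrR hR
  have i4 := hω.assocW_intervalIntegrable (hr.trans hrR) hRb hb1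
  have e1 := intervalIntegral.integral_add_adjacent_intervals i1 i2
  have e2 := intervalIntegral.integral_add_adjacent_intervals i3 i4
  have p4 : 0 ≤ ∫ s in R..b, assocW ω s := intervalIntegral.integral_nonneg hRb
    fun u hu => hω.assocW_nonneg ⟨hr.trans (hrR.trans hu.1), hu.2.trans_lt hb1⟩
  have p1 : ∫ s in r..a, assocW ω s ≤ (K - 1) * tailInt ω r := by
    have hm : ∫ s in r..a, assocW ω s ≤ ∫ _ in r..a, tailInt ω r / (1 - a) := by
      refine intervalIntegral.integral_mono_on hra i1 intervalIntegrable_const fun s hs => ?_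
      have h1a : 0 < 1 - a := by linarith
      have := (hω.2.2 r ⟨hr, by linarith⟩).le
      have hs2 := hs.2
      exact div_le_div₀ this (hω.tailInt_antitone hr hs.1 (by linarith)) h1a (by linarith)
    rw [intervalIntegral.integral_const, smul_eq_mul] at hm
    refine hm.trans_eq ?_
    have : (1 : ℝ) - r ≠ 0 := by linarith
    rw [ha, sub_sub_cancel]
    field_simp
    ring
  have hC1 : 0 < C - 1 := by linarith
  rw [div_mul_eq_mul_div, le_div_iff₀ hC1]
  -- absorb `I(r, R)`, after multiplying `I(r, R) ≤ I(r, a) + I(a, b)` by `C`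
  nlinarith [mul_le_mul_of_nonneg_left
    (show ∫ s in r..R, assocW ω s ≤ (K - 1) * tailInt ω r + ∫ s in a..b, assocW ω s by linarith)
    (show 0 ≤ C by linarith)]

lemma assocW_integrableOn (hω : RadialWeight ω) {M : ℝ}
    (h : ∀ R, 0 ≤ R → R < 1 → ∫ s in (0:ℝ)..R, assocW ω s ≤ M) :
    IntegrableOn (assocW ω) (Ico 0 1) := by
  rw [← integrableOn_Icc_iff_integrableOn_Ico, integrableOn_Icc_iff_integrableOn_Ioc]
  have hR : ∀ n : ℕ, 0 ≤ 1 - 1 / ((n:ℝ) + 1) ∧ 1 - 1 / ((n:ℝ) + 1) < 1 := fun n => by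
    have h1 : (0:ℝ) < 1 / ((n:ℝ) + 1) := by positivity
    have h2 : 1 / ((n:ℝ) + 1) ≤ 1 := by
      rw [div_le_one (by positivity)]; linarith [(Nat.cast_nonneg n : (0:ℝ) ≤ n)]
    constructor <;> linarith
  refine integrableOn_Ioc_of_intervalIntegral_norm_bounded_right (I := M)
    (l := Filter.atTop) (b := fun n : ℕ => 1 - 1 / ((n:ℝ) + 1)) (fun n => ?_) ?_
    (Filter.Eventually.of_forall fun n => ?_)
  · exact (hω.assocW_intervalIntegrable le_rfl (hR n).1 (hR n).2).1
  · simpa using tendsto_one_div_add_atTop_nhds_zero_nat.const_sub (1:ℝ)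
  · refine le_trans (le_of_eq ?_) (h _ (hR n).1 (hR n).2)
    rw [intervalIntegral.integral_of_le (hR n).1]
    refine setIntegral_congr_fun measurableSet_Ioc fun s hs => ?_
    exact Real.norm_of_nonneg (hω.assocW_nonneg ⟨hs.1.le, hs.2.trans_lt (hR n).2⟩)

lemma tailInt_assocW_le (hi : IntervalIntegrable (assocW ω) volume 0 1) {r M : ℝ}
    (hr : r ∈ Ico (0:ℝ) 1) (h : ∀ R, r ≤ R → R < 1 → ∫ s in r..R, assocW ω s ≤ M) :
    tailInt (assocW ω) r ≤ M := by
  have hc := intervalIntegral.continuousOn_primitive_interval' hi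
    (a := r) (by rw [uIcc_of_le zero_le_one]; exact ⟨hr.1, hr.2.le⟩)
  rw [uIcc_of_le zero_le_one] at hc
  have ht := (hc 1 ⟨zero_le_one, le_rfl⟩).mono_left
    (nhdsWithin_mono 1 (show Ioo r 1 ⊆ Icc 0 1 from
      fun s hs => ⟨hr.1.trans hs.1.le, hs.2.le⟩))
  have : (nhdsWithin (1:ℝ) (Ioo r 1)).NeBot := right_nhdsWithin_Ioo_neBot hr.2
  refine le_of_tendsto ht ?_
  filter_upwards [self_mem_nhdsWithin] with R hR using h R hR.1.le hR.2

/-- Lower estimate, obtained by discarding everything outside `[r, (1 + r)/2]`. -/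
lemma half_tailInt_le (hω : RadialWeight ω) (hi : IntervalIntegrable (assocW ω) volume 0 1)
    {r : ℝ} (hr : r ∈ Ico (0:ℝ) 1) :
    tailInt ω ((1 + r) / 2) / 2 ≤ tailInt (assocW ω) r := by
  obtain ⟨h0, h1⟩ := hr
  set m := (1 + r) / 2 with hm
  have hrm : r ≤ m := by linarith
  have hm1 : m < 1 := by linarith
  have i1 := hω.assocW_intervalIntegrable h0 hrm hm1
  have i2 : IntervalIntegrable (assocW ω) volume m 1 := hi.mono_set (by
    rw [uIcc_of_le hm1.le, uIcc_of_le zero_le_one]; exact Icc_subset_Icc (by linarith) le_rfl)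
  have e := intervalIntegral.integral_add_adjacent_intervals i1 i2
  have p2 : 0 ≤ ∫ s in m..1, assocW ω s := by
    refine intervalIntegral.integral_nonneg hm1.le fun s hs => ?_
    rcases hs.2.lt_or_eq with h | rfl
    · exact hω.assocW_nonneg ⟨by linarith [hs.1], h⟩
    · simp [assocW]
  have hlow : ∫ _ in r..m, tailInt ω m / (1 - r) ≤ ∫ s in r..m, assocW ω s := by
    refine intervalIntegral.integral_mono_on hrm intervalIntegrable_const i1 fun s hs => ?_
    have hs0 := h0.trans hs.1
    have hs1 := hs.2.trans_lt hm1
    exact div_le_div₀ (hω.2.2 s ⟨hs0, hs1⟩).le (hω.tailInt_antitone hs0 hs.2 hm1)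
      (by linarith) (by linarith [hs.1])
  rw [intervalIntegral.integral_const, smul_eq_mul] at hlow
  have hv : (m - r) * (tailInt ω m / (1 - r)) = tailInt ω m / 2 := by
    have h1r : (1:ℝ) - r ≠ 0 := by linarith
    have hmr : m - r = (1 - r) / 2 := by rw [hm]; ring
    rw [hmr]
    field_simp
  unfold tailInt at *
  linarith

end Helpers

/-- If `ω ∈ D = D̂ ∩ Ď`, then `ω̃` is a weight and
`ω̂(r) ≍ ∫_r^1 ω̃(s) ds` on `[0,1)`. -/
theorem statement15 (ω : ℝ → ℝ) (hω : RadialWeight ω) (h1 : Dhat ω) (h2 : Dcheck ω) :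
    MeasureTheory.IntegrableOn (assocW ω) (Set.Ico 0 1) ∧
      ∃ c : ℝ, 1 ≤ c ∧ ∀ r ∈ Set.Ico (0:ℝ) 1,
        c⁻¹ * tailInt ω r ≤ tailInt (assocW ω) r ∧
          tailInt (assocW ω) r ≤ c * tailInt ω r := by
  obtain ⟨D, hD, hdhat⟩ := h1
  obtain ⟨K, C, hK, hC, hdcheck⟩ := h2
  have hbound := fun {r R : ℝ} => assocW_integral_bound hω hK hC hdcheck (r := r) (R := R)
  have hint : IntegrableOn (assocW ω) (Ico 0 1) :=
    assocW_integrableOn hω fun R hR0 hR1 => hbound le_rfl hR0 hR1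
  have hi : IntervalIntegrable (assocW ω) volume 0 1 :=
    (intervalIntegrable_iff_integrableOn_Ico_of_le zero_le_one).2 hint
  refine ⟨hint, max (2 * D) ((K - 1) * C / (C - 1)), le_max_of_le_left (by linarith),
    fun r hr => ⟨?_, ?_⟩⟩
  · have hpos := (hω.2.2 r hr).le
    have hle := half_tailInt_le hω hi hr
    have hd := hdhat r hr
    calc (max (2 * D) ((K - 1) * C / (C - 1)))⁻¹ * tailInt ω r
        ≤ (2 * D)⁻¹ * tailInt ω r := by
          gcongr
          exact le_max_left _ _
      _ ≤ tailInt ω ((1 + r) / 2) / 2 := by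
          rw [inv_mul_le_iff₀ (by linarith)]
          linarith
      _ ≤ tailInt (assocW ω) r := hle
  · refine (tailInt_assocW_le hi hr fun R hrR hR => hbound hr.1 hrR hR).trans ?_
    exact mul_le_mul_of_nonneg_right (le_max_right _ _) (hω.2.2 r hr).le
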